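/- Let α, γ ∈ ℝ and let I ⊆ ℝ be an interval with 0 ∉ I. Suppose y : I → ℝ is twice differentiable, nowhere vanishing, and solves the Painlevé III equation with parameters (α, 0, γ, 0): y'' = (y')²/y − y'/x + α·y²/x + γ·y³. Then the function x ↦ x²·(y'/y)² + 2x·(y'/y) − 2α·x·y − γ·x²·y² is constant on I, i.e. it is a first integral of PIII(α, 0, γ, 0). -/

import Mathlib

/-!
Put `t = x y` and `w = x y' / y + 1`. In these variables Painlevé III with `β = δ = 0` is a
Newton equation up to the time change `d/dτ = y⁻¹ d/dx`: it reads `t' = y w`, `w' = y (α + γ t)`.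
The energy `w ^ 2 - (2 α t + γ t ^ 2)` is therefore conserved, and it exceeds the first integral
by exactly `1`.
-/

section Derivatives

variable {𝕜 : Type*} [NontriviallyNormedField 𝕜] {s : Set 𝕜} {x : 𝕜}

theorem hasDerivWithinAt_zero_sq_sub_potential {t w V : 𝕜 → 𝕜} {a F : 𝕜}
    (ht : HasDerivWithinAt t (a * w x) s x) (hw : HasDerivWithinAt w (a * F) s x)
    (hV : HasDerivAt V (2 * F) (t x)) :
    HasDerivWithinAt (fun z => w z ^ 2 - V (t z)) 0 s x := by
  refine ((hw.fun_pow 2).sub (hV.comp_hasDerivWithinAt x ht)).congr_deriv ?_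
  simp only [Nat.cast_ofNat, Nat.add_one_sub_one, pow_one]
  ring

variable {y y' : 𝕜 → 𝕜}

theorem hasDerivWithinAt_id_mul_of_ne_zero (hy : HasDerivWithinAt y (y' x) s x) (hyx : y x ≠ 0) :
    HasDerivWithinAt (fun z => z * y z) (y x * (x * (y' x / y x) + 1)) s x := by
  refine ((hasDerivWithinAt_id x s).fun_mul hy).congr_deriv ?_
  simp only [id_eq]
  field_simp
  ring

theorem hasDerivWithinAt_mul_div_of_PIII {α γ y'' : 𝕜} (hx : x ≠ 0)
    (hy : HasDerivWithinAt y (y' x) s x) (hy' : HasDerivWithinAt y' y'' s x) (hyx : y x ≠ 0)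
    (hode : y'' = y' x ^ 2 / y x - y' x / x + α * y x ^ 2 / x + γ * y x ^ 3) :
    HasDerivWithinAt (fun z => z * (y' z / y z)) (y x * (α + γ * (x * y x))) s x := by
  refine ((hasDerivWithinAt_id x s).fun_mul (hy'.fun_div hy hyx)).congr_deriv ?_
  rw [hode]
  simp only [id_eq]
  field_simp
  ring

theorem hasDerivAt_quadratic_potential (α γ t : 𝕜) :
    HasDerivAt (fun u => 2 * α * u + γ * u ^ 2) (2 * (α + γ * t)) t := by
  refine (((hasDerivAt_id t).const_mul (2 * α)).fun_add
    ((hasDerivAt_pow 2 t).const_mul γ)).congr_deriv ?_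
  simp only [Nat.cast_ofNat, Nat.add_one_sub_one, pow_one, mul_one]
  ring

theorem hasDerivWithinAt_zero_PIII_energy {α γ y'' : 𝕜} (hx : x ≠ 0)
    (hy : HasDerivWithinAt y (y' x) s x) (hy' : HasDerivWithinAt y' y'' s x) (hyx : y x ≠ 0)
    (hode : y'' = y' x ^ 2 / y x - y' x / x + α * y x ^ 2 / x + γ * y x ^ 3) :
    HasDerivWithinAt
      (fun z => (z * (y' z / y z) + 1) ^ 2 - (2 * α * (z * y z) + γ * (z * y z) ^ 2)) 0 s x :=
  hasDerivWithinAt_zero_sq_sub_potential (t := fun z => z * y z)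
    (w := fun z => z * (y' z / y z) + 1) (V := fun u => 2 * α * u + γ * u ^ 2)
    (hasDerivWithinAt_id_mul_of_ne_zero hy hyx)
    ((hasDerivWithinAt_mul_div_of_PIII hx hy hy' hyx hode).add_const 1)
    (hasDerivAt_quadratic_potential α γ (x * y x))

end Derivatives

theorem eq_of_hasDerivWithinAt_zero_of_convex {𝕜 E : Type*} [RCLike 𝕜]
    [NormedAddCommGroup E] [NormedSpace 𝕜 E] {f : 𝕜 → E} {s : Set 𝕜} (hs : Convex ℝ s)
    (hf : ∀ x ∈ s, HasDerivWithinAt f 0 s x) {a b : 𝕜} (ha : a ∈ s) (hb : b ∈ s) :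
    f a = f b := by
  have hle : ‖f a - f b‖ ≤ 0 * ‖a - b‖ :=
    hs.norm_image_sub_le_of_norm_hasDerivWithin_le hf (fun _ _ => norm_zero.le) hb ha
  rwa [zero_mul, norm_le_zero_iff, sub_eq_zero] at hle

theorem PIII_first_integral_general {𝕜 : Type*} [RCLike 𝕜] (α γ : 𝕜) {I : Set 𝕜}
    (hI : Convex ℝ I) (h0 : (0 : 𝕜) ∉ I) {y y' y'' : 𝕜 → 𝕜}
    (hy : ∀ x ∈ I, HasDerivWithinAt y (y' x) I x)
    (hy' : ∀ x ∈ I, HasDerivWithinAt y' (y'' x) I x)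
    (hynz : ∀ x ∈ I, y x ≠ 0)
    (hode : ∀ x ∈ I,
      y'' x = y' x ^ 2 / y x - y' x / x + α * y x ^ 2 / x + γ * y x ^ 3) :
    ∀ x ∈ I, ∀ x' ∈ I,
      x ^ 2 * (y' x / y x) ^ 2 + 2 * x * (y' x / y x)
          - 2 * α * x * y x - γ * x ^ 2 * y x ^ 2
        = x' ^ 2 * (y' x' / y x') ^ 2 + 2 * x' * (y' x' / y x')
          - 2 * α * x' * y x' - γ * x' ^ 2 * y x' ^ 2 := by
  intro a ha b hb
  have energy_eq := eq_of_hasDerivWithinAt_zero_of_convex hI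
    (fun x hx => hasDerivWithinAt_zero_PIII_energy (ne_of_mem_of_not_mem hx h0)
      (hy x hx) (hy' x hx) (hynz x hx) (hode x hx)) ha hb
  linear_combination energy_eq

/-- A first integral of Painlevé III with parameters `(α, 0, γ, 0)`:
along every nowhere-vanishing solution `y` of
`y'' = (y')²/y − y'/x + α y²/x + γ y³` on an interval avoiding `0`,
the quantity `x²(y'/y)² + 2x(y'/y) − 2αxy − γx²y²` is constant. -/
theorem PIII_first_integral
    (α γ : ℝ) (I : Set ℝ) (hI : I.OrdConnected) (h0 : (0 : ℝ) ∉ I)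
    (y : ℝ → ℝ)
    (hy1 : ∀ x ∈ I, DifferentiableAt ℝ y x)
    (hy2 : ∀ x ∈ I, DifferentiableAt ℝ (deriv y) x)
    (hynz : ∀ x ∈ I, y x ≠ 0)
    (hode : ∀ x ∈ I,
      deriv (deriv y) x =
        (deriv y x) ^ 2 / y x - deriv y x / x + α * (y x) ^ 2 / x + γ * (y x) ^ 3) :
    ∀ x ∈ I, ∀ x' ∈ I,
      x ^ 2 * (deriv y x / y x) ^ 2 + 2 * x * (deriv y x / y x)
          - 2 * α * x * y x - γ * x ^ 2 * (y x) ^ 2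
        = x' ^ 2 * (deriv y x' / y x') ^ 2 + 2 * x' * (deriv y x' / y x')
          - 2 * α * x' * y x' - γ * x' ^ 2 * (y x') ^ 2 := by
  exact PIII_first_integral_general α γ hI.convex h0
    (fun x hx => (hy1 x hx).hasDerivAt.hasDerivWithinAt)
    (fun x hx => (hy2 x hx).hasDerivAt.hasDerivWithinAt) hynz hode
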